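/- Let L be a finite distributive lattice with top 1 and bottom 0. Then: (i) B(L) has a least element c and every x ∈ B(L) has a complement ¬x ∈ B(L) satisfying x ∨ ¬x = 1 and x ∧ ¬x = c (so B(L) is a boolean lattice); (ii) for every a ∈ B(L) and every x with a ≤ x, the complement of x in the interval [a, 1] equals ¬x ∨ a, i.e., x ∨ (¬x ∨ a) = 1 and x ∧ (¬x ∨ a) = a. -/

import Mathlib

/-- A boolean element of a bounded lattice: the interval `[a, 1]` is a boolean
lattice, i.e. every `x ≥ a` has a complement in `[a, 1]`. -/
def BooleanElt {L : Type*} [Lattice L] [OrderTop L] (a : L) : Prop :=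
  ∀ x, a ≤ x → ∃ y, a ≤ y ∧ x ⊔ y = ⊤ ∧ x ⊓ y = a

/-!
Complements can be tested against all of `L`: `a` is boolean iff every `x` has some `y ≥ a` with
`x ⊔ y = ⊤` and `x ⊓ y ≤ a`. In a distributive lattice, meeting such a `y` for `a` with such a `z`
for `b` gives one for `a ⊓ b`, so the boolean elements are closed under meets and the descending
chain condition provides a least one, `c`. They form the up-set of `c`, since complements in
`[c, 1]` yield complements in `[a, 1]` for `a ≥ c` by the modular law
`x ⊓ (y ⊔ a) = (x ⊓ y) ⊔ a` for `a ≤ x`.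
-/

theorem inf_sup_eq_right_of_inf_le {L : Type*} [Lattice L] [IsModularLattice L] {a x y : L}
    (hax : a ≤ x) (hxy : x ⊓ y ≤ a) : x ⊓ (y ⊔ a) = a := by
  rw [← inf_sup_assoc_of_le y hax, sup_eq_right.2 hxy]

section Lattice

variable {L : Type*} [Lattice L] [OrderTop L] {a b : L}

theorem booleanElt_iff_forall_exists_inf_le :
    BooleanElt a ↔ ∀ x, ∃ y, a ≤ y ∧ x ⊔ y = ⊤ ∧ x ⊓ y ≤ a := by
  constructor
  · intro ha x
    obtain ⟨y, hay, hsup, hinf⟩ := ha (x ⊔ a) le_sup_right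
    refine ⟨y, hay, ?_, ?_⟩
    · rwa [sup_assoc, sup_eq_right.2 hay] at hsup
    · exact (inf_le_inf_right y le_sup_left).trans hinf.le
  · intro h x hax
    obtain ⟨y, hay, hsup, hinf⟩ := h x
    exact ⟨y, hay, hsup, hinf.antisymm (le_inf hax hay)⟩

theorem booleanElt_top : BooleanElt (⊤ : L) :=
  booleanElt_iff_forall_exists_inf_le.2 fun x ↦ ⟨⊤, le_rfl, sup_top_eq x, le_top⟩

theorem BooleanElt.mono [IsModularLattice L] (ha : BooleanElt a) (hab : a ≤ b) :
    BooleanElt b := by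
  intro x hbx
  obtain ⟨y, -, hsup, hinf⟩ := ha x (hab.trans hbx)
  refine ⟨y ⊔ b, le_sup_right, ?_, inf_sup_eq_right_of_inf_le hbx (hinf.trans_le hab)⟩
  rw [← sup_assoc, hsup, top_sup_eq]

end Lattice

section DistribLattice

variable {L : Type*} [DistribLattice L] [OrderTop L]

theorem BooleanElt.inf {a b : L} (ha : BooleanElt a) (hb : BooleanElt b) :
    BooleanElt (a ⊓ b) := by
  rw [booleanElt_iff_forall_exists_inf_le] at ha hb ⊢
  intro x
  obtain ⟨y, hay, hxy, hxya⟩ := ha x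
  obtain ⟨z, hbz, hxz, hxzb⟩ := hb x
  refine ⟨y ⊓ z, inf_le_inf hay hbz, ?_, ?_⟩
  · rw [sup_inf_left, hxy, hxz, inf_top_eq]
  · rw [inf_inf_distrib_left]
    exact inf_le_inf hxya hxzb

theorem exists_isLeast_booleanElt [WellFoundedLT L] :
    ∃ c : L, IsLeast {a | BooleanElt a} c := by
  obtain ⟨c, hc⟩ := exists_minimal_of_wellFoundedLT (BooleanElt (L := L)) ⟨⊤, booleanElt_top⟩
  exact ⟨c, hc.prop, fun b hb ↦ inf_eq_left.1 (hc.eq_of_le (hc.prop.inf hb) inf_le_left)⟩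

end DistribLattice

theorem boolean_elements_of_finite_distrib_lattice_general {L : Type*} [DistribLattice L]
    [OrderTop L] [WellFoundedLT L] :
    ∃ c : L, BooleanElt c ∧ (∀ b, BooleanElt b → c ≤ b) ∧
      (∀ x, BooleanElt x → ∃ nx, BooleanElt nx ∧ x ⊔ nx = ⊤ ∧ x ⊓ nx = c) ∧
      (∀ a x nx : L, BooleanElt a → a ≤ x → x ⊔ nx = ⊤ → x ⊓ nx = c →
        x ⊔ (nx ⊔ a) = ⊤ ∧ x ⊓ (nx ⊔ a) = a) := by
  obtain ⟨c, hc, hleast⟩ := exists_isLeast_booleanElt (L := L)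
  refine ⟨c, hc, fun b hb ↦ hleast hb, ?_, ?_⟩
  · intro x hx
    obtain ⟨nx, hcnx, hsup, hinf⟩ := hc x (hleast hx)
    exact ⟨nx, hc.mono hcnx, hsup, hinf⟩
  · intro a x nx ha hax hsup hinf
    refine ⟨?_, inf_sup_eq_right_of_inf_le hax (hinf.trans_le (hleast ha))⟩
    rw [← sup_assoc, hsup, top_sup_eq]

/-- in a finite distributive lattice, the boolean elements form a
boolean lattice: there is a least boolean element `c`, every boolean element has
a complement relative to `c` inside the boolean elements, and for `a` boolean
and `a ≤ x`, the complement of `x` in `[a, 1]` is `¬x ∨ a` where `¬x` is the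
complement of `x` among the boolean elements. -/
theorem boolean_elements_of_finite_distrib_lattice {L : Type*} [DistribLattice L]
    [Fintype L] [BoundedOrder L] :
    ∃ c : L, BooleanElt c ∧ (∀ b, BooleanElt b → c ≤ b) ∧
      (∀ x, BooleanElt x → ∃ nx, BooleanElt nx ∧ x ⊔ nx = ⊤ ∧ x ⊓ nx = c) ∧
      (∀ a x nx : L, BooleanElt a → a ≤ x → BooleanElt nx →
        x ⊔ nx = ⊤ → x ⊓ nx = c →
          x ⊔ (nx ⊔ a) = ⊤ ∧ x ⊓ (nx ⊔ a) = a) := by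
  obtain ⟨c, hc, hleast, hcompl, hrel⟩ :=
    boolean_elements_of_finite_distrib_lattice_general (L := L)
  exact ⟨c, hc, hleast, hcompl, fun a x nx ha hax _ ↦ hrel a x nx ha hax⟩
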